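/- Let n = x·s where s > 1 is a squarefree positive integer and x is a positive integer coprime to s. Let k = z·t be a divisor of n with z | x and t | s. Then Y[n, z·t] = s·Y[x,z] if t = s, and Y[n, z·t] = 0 if t ≠ s. -/

import Mathlib

/-- The Ramanujan sum `c_d(r)`: the sum of the `r`-th powers of all primitive
`d`-th roots of unity. -/
noncomputable def ramanujanSum (d r : ℕ) : ℂ :=
  ∑ m ∈ (Finset.range d).filter (fun m => Nat.gcd m d = 1),
    Complex.exp (2 * Real.pi * Complex.I * ((m : ℂ) * (r : ℂ) / (d : ℂ)))

/-- `Y[n,k] = ∑_{d ∣ n} c_k(n/d) · c_d(n/d)`. -/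
noncomputable def Y (n k : ℕ) : ℂ :=
  ∑ d ∈ n.divisors, ramanujanSum k (n / d) * ramanujanSum d (n / d)

/-!
The `n`-th roots of unity split into primitive `d`-th roots for `d ∣ n`, so
`∑ d ∣ n, c_d(r)` is `n` if `n ∣ r` and `0` otherwise. Möbius inversion in `n` gives
`c_n(r) = ∑ e ∣ gcd(n, r), e μ(n / e)`, which makes `c_n(r)` jointly multiplicative, and hence
`Y[ab, zt] = Y[a, z] Y[b, t]` when `az` and `bt` are coprime. For squarefree `s` every `d ∣ s` is
coprime to `s / d`, so `c_d(s / d) = μ(d)` and `Y[s, t] = ∑ d ∣ s, μ(d) c_t(s / d)`. A second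
Möbius inversion, now in the argument of `c_t`, evaluates this sum.
-/

section PrimitiveRoots

variable {R : Type*} [CommRing R] [IsDomain R] {ζ : R} {n : ℕ}

lemma sum_divisors_sum_primitiveRoots {M : Type*} [AddCommMonoid M] (hζ : IsPrimitiveRoot ζ n)
    (f : R → M) :
    ∑ d ∈ n.divisors, ∑ y ∈ primitiveRoots d R, f y = ∑ i ∈ Finset.range n, f (ζ ^ i) := by
  classical
  have hroots : Polynomial.nthRootsFinset n (1 : R) = (Finset.range n).image (ζ ^ ·) := by
    ext y
    simp [Polynomial.nthRootsFinset, hζ.nthRoots_eq (one_pow n)]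
  have hinj : Set.InjOn (ζ ^ ·) (Finset.range n : Set ℕ) := hζ.injOn_pow
  rw [← Finset.sum_image hinj, ← hroots, IsPrimitiveRoot.nthRoots_one_eq_biUnion_primitiveRoots,
    Finset.sum_biUnion fun _ _ _ _ hne ↦ IsPrimitiveRoot.disjoint hne]

lemma sum_range_pow_pow_of_isPrimitiveRoot (hζ : IsPrimitiveRoot ζ n) (r : ℕ) :
    ∑ i ∈ Finset.range n, (ζ ^ i) ^ r = if n ∣ r then (n : R) else 0 := by
  simp_rw [pow_right_comm ζ _ r]
  split_ifs with hnr
  · simp [(hζ.pow_eq_one_iff_dvd r).mpr hnr]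
  · have hne : ζ ^ r - 1 ≠ 0 := sub_ne_zero.mpr (mt (hζ.pow_eq_one_iff_dvd r).mp hnr)
    refine (mul_eq_zero.mp ?_).resolve_left hne
    rw [mul_geom_sum, pow_right_comm, hζ.pow_eq_one, one_pow, sub_self]

end PrimitiveRoots

lemma ramanujanSum_eq_sum_primitiveRoots (n r : ℕ) :
    ramanujanSum n r = ∑ y ∈ primitiveRoots n ℂ, y ^ r := by
  obtain rfl | hn := n.eq_zero_or_pos
  · simp [ramanujanSum]
  have : NeZero n := ⟨hn.ne'⟩
  have hexp := Complex.isPrimitiveRoot_exp n hn.ne'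
  refine Finset.sum_nbij (Complex.exp (2 * Real.pi * Complex.I / n) ^ ·) ?_ ?_ ?_ ?_
  · intro m hm
    exact (mem_primitiveRoots hn).mpr (hexp.pow_of_coprime m (Finset.mem_filter.mp hm).2)
  · exact hexp.injOn_pow.mono fun m hm ↦ (Finset.mem_filter.mp hm).1
  · intro y hy
    obtain ⟨m, hmn, hm, rfl⟩ := hexp.isPrimitiveRoot_iff.mp ((mem_primitiveRoots hn).mp hy)
    exact ⟨m, by simp [hmn, hm.gcd_eq_one], rfl⟩
  · intro m _
    rw [← Complex.exp_nat_mul, ← Complex.exp_nat_mul]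
    ring_nf

section Moebius

open ArithmeticFunction
open scoped ArithmeticFunction.Moebius

/-- The arithmetic function that is the identity on the divisors of `r` and zero elsewhere. It is
the Dirichlet convolution of `ζ` with `n ↦ c_n(r)`. -/
def divisorId (r : ℕ) : ArithmeticFunction ℂ :=
  ⟨fun n ↦ if n ∣ r then n else 0, by simp⟩

lemma divisorId_apply (r n : ℕ) : divisorId r n = if n ∣ r then (n : ℂ) else 0 := rfl

lemma divisorId_one : divisorId 1 = 1 := by
  ext n
  by_cases hn : n = 1 <;> simp [divisorId_apply, one_apply, hn]

lemma isMultiplicative_divisorId (r : ℕ) : (divisorId r).IsMultiplicative := by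
  refine ⟨by simp [divisorId_apply], fun {m n} hmn ↦ ?_⟩
  have hdvd : m * n ∣ r ↔ m ∣ r ∧ n ∣ r :=
    ⟨fun h ↦ ⟨dvd_of_mul_right_dvd h, dvd_of_mul_left_dvd h⟩,
      fun h ↦ hmn.mul_dvd_of_dvd_of_dvd h.1 h.2⟩
  simp only [divisorId_apply, hdvd, ite_zero_mul_ite_zero, Nat.cast_mul]

lemma sum_divisors_ramanujanSum (n r : ℕ) :
    ∑ d ∈ n.divisors, ramanujanSum d r = divisorId r n := by
  obtain rfl | hn := eq_or_ne n 0
  · simp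
  have hexp := Complex.isPrimitiveRoot_exp n hn
  simp_rw [ramanujanSum_eq_sum_primitiveRoots]
  rw [sum_divisors_sum_primitiveRoots hexp, sum_range_pow_pow_of_isPrimitiveRoot hexp,
    divisorId_apply]

lemma ramanujanSum_eq_moebius_mul_divisorId (n r : ℕ) :
    ramanujanSum n r = ((μ : ArithmeticFunction ℂ) * divisorId r) n := by
  obtain rfl | hn := n.eq_zero_or_pos
  · simp [ramanujanSum]
  rw [mul_apply]
  exact (sum_eq_iff_sum_mul_moebius_eq.mp
    (fun n _ ↦ sum_divisors_ramanujanSum n r) n hn).symm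

lemma ramanujanSum_mul_left {m n : ℕ} (hmn : m.Coprime n) (r : ℕ) :
    ramanujanSum (m * n) r = ramanujanSum m r * ramanujanSum n r := by
  simp only [ramanujanSum_eq_moebius_mul_divisorId]
  exact (isMultiplicative_moebius.intCast.mul
    (isMultiplicative_divisorId r)).map_mul_of_coprime hmn

lemma ramanujanSum_eq_sum_divisors (n r : ℕ) :
    ramanujanSum n r = ∑ e ∈ n.divisors with e ∣ r, (e : ℂ) * μ (n / e) := by
  rw [ramanujanSum_eq_moebius_mul_divisorId, mul_comm, mul_apply,
    Nat.sum_divisorsAntidiagonal (fun e d ↦ divisorId r e * (μ : ArithmeticFunction ℂ) d)]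
  simp only [divisorId_apply, intCoe_apply, ite_mul, zero_mul, Finset.sum_filter]

lemma ramanujanSum_mul_right_of_coprime {n u : ℕ} (hnu : n.Coprime u) (r : ℕ) :
    ramanujanSum n (r * u) = ramanujanSum n r := by
  have hdvd : ∀ e ∈ n.divisors, (e ∣ r * u ↔ e ∣ r) := fun e he ↦
    (hnu.coprime_dvd_left (Nat.dvd_of_mem_divisors he)).dvd_mul_right
  rw [ramanujanSum_eq_sum_divisors, ramanujanSum_eq_sum_divisors, Finset.filter_congr hdvd]

lemma ramanujanSum_mul_mul {d e u v : ℕ} (h : (d * u).Coprime (e * v)) :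
    ramanujanSum (d * e) (u * v) = ramanujanSum d u * ramanujanSum e v := by
  have hde : d.Coprime e := h.coprime_mul_right.coprime_mul_right_right
  have hdv : d.Coprime v := h.coprime_mul_right.coprime_mul_left_right
  have heu : e.Coprime u := h.coprime_mul_left.coprime_mul_right_right.symm
  rw [ramanujanSum_mul_left hde, ramanujanSum_mul_right_of_coprime hdv, mul_comm u v,
    ramanujanSum_mul_right_of_coprime heu]

lemma ramanujanSum_eq_moebius_of_coprime {n r : ℕ} (hnr : n.Coprime r) :
    ramanujanSum n r = μ n := by
  rw [← one_mul r, ramanujanSum_mul_right_of_coprime hnr, ramanujanSum_eq_moebius_mul_divisorId,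
    divisorId_one, mul_one, intCoe_apply]

lemma sum_divisors_moebius_mul_ramanujanSum (s t : ℕ) :
    ∑ d ∈ s.divisors, (μ d : ℂ) * ramanujanSum t (s / d) =
      if s ∣ t then (s : ℂ) * μ (t / s) else 0 := by
  obtain rfl | hs := s.eq_zero_or_pos
  · simp
  have hsum (r : ℕ) (hr : r > 0) :
      ∑ e ∈ r.divisors, (if e ∣ t then (e : ℂ) * μ (t / e) else 0) = ramanujanSum t r := by
    obtain rfl | ht := eq_or_ne t 0
    · simp [ramanujanSum]
    rw [ramanujanSum_eq_sum_divisors, ← Finset.sum_filter]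
    refine Finset.sum_congr ?_ fun _ _ ↦ rfl
    ext e
    simp [ht, hr.ne', and_comm]
  rw [← sum_eq_iff_sum_mul_moebius_eq.mp hsum s hs,
    Nat.sum_divisorsAntidiagonal (fun d e ↦ (μ d : ℂ) * ramanujanSum t e)]

lemma Y_of_squarefree {s : ℕ} (hs : Squarefree s) (t : ℕ) :
    Y s t = if s ∣ t then (s : ℂ) * μ (t / s) else 0 := by
  rw [← sum_divisors_moebius_mul_ramanujanSum, Y]
  refine Finset.sum_congr rfl fun d hd ↦ ?_
  have hcop : d.Coprime (s / d) := by
    apply Nat.coprime_of_squarefree_mul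
    rwa [Nat.mul_div_cancel' (Nat.dvd_of_mem_divisors hd)]
  rw [ramanujanSum_eq_moebius_of_coprime hcop, mul_comm]

end Moebius

lemma Y_mul_mul {a b z t : ℕ} (h : (a * z).Coprime (b * t)) :
    Y (a * b) (z * t) = Y a z * Y b t := by
  have hab : a.Coprime b := h.coprime_mul_right.coprime_mul_right_right
  rw [Y, Nat.divisors_mul, Finset.mul_def, Finset.sum_image hab.mul_injOn_divisors,
    Finset.sum_product, Y, Y, Finset.sum_mul_sum]
  refine Finset.sum_congr rfl fun d hd ↦ Finset.sum_congr rfl fun e he ↦ ?_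
  have hda := Nat.dvd_of_mem_divisors hd
  have heb := Nat.dvd_of_mem_divisors he
  have hzt : (z * (a / d)).Coprime (t * (b / e)) := by
    rw [mul_comm z, mul_comm t]
    exact h.of_dvd (mul_dvd_mul_right (Nat.div_dvd_of_dvd hda) z)
      (mul_dvd_mul_right (Nat.div_dvd_of_dvd heb) t)
  have hde : (d * (a / d)).Coprime (e * (b / e)) := by
    rwa [Nat.mul_div_cancel' hda, Nat.mul_div_cancel' heb]
  rw [Nat.mul_div_mul_comm hda heb, ramanujanSum_mul_mul hzt, ramanujanSum_mul_mul hde,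
    mul_mul_mul_comm]

theorem stmt_14 (x s : ℕ) (hx : 0 < x) (hs : 1 < s) (hsf : Squarefree s)
    (hcop : Nat.Coprime x s) (z t : ℕ) (hz : z ∣ x) (ht : t ∣ s) :
    Y (x * s) (z * t) = if t = s then (s : ℂ) * Y x z else 0 := by
  have hxzs : (x * z).Coprime s := hcop.mul_left (hcop.coprime_dvd_left hz)
  have hxzst : (x * z).Coprime (s * t) := hxzs.mul_right (hxzs.coprime_dvd_right ht)
  rw [Y_mul_mul hxzst, Y_of_squarefree hsf]
  obtain rfl | hts := eq_or_ne t s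
  · have htt : t / t = 1 := Nat.div_self (zero_lt_one.trans hs)
    simp [htt, mul_comm]
  · have hst : ¬ s ∣ t := fun hst ↦ hts (Nat.dvd_antisymm ht hst)
    simp [hst, hts]
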